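/- There exist 8 mutually orthogonal Latin squares of order 96; that is, N(96) ≥ 8. -/

import Mathlib

/-- A Latin square of order `n`: every row map and every column map is a bijection. -/
def IsLatinSquare {n : ℕ} (L : Fin n → Fin n → Fin n) : Prop :=
  (∀ i, Function.Bijective fun j => L i j) ∧ (∀ j, Function.Bijective fun i => L i j)

/-- Two squares are orthogonal if the superposition map is injective. -/
def IsOrthogonal {n : ℕ} (L₁ L₂ : Fin n → Fin n → Fin n) : Prop :=
  Function.Injective fun p : Fin n × Fin n => (L₁ p.1 p.2, L₂ p.1 p.2)

/-!
A difference matrix `D` over a group of order `n` with `m + 1` rows yields `m` mutually orthogonal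
Latin squares of order `n`, namely `(g, c) ↦ D r c - D r₀ c + g` for the rows `r ≠ r₀`. For `n = 96`
and `m = 8` we take the group `G = 𝔽₄ ⊕ 𝔽₃ ⊕ 𝔽₂³`. The 96 columns form 12 blocks, each a copy of
`T = 𝔽₄ ⊕ 𝔽₂`, and on each block row `r` is a translate of one additive map `B r : T → G`. Two rows
`r` and `s` differ by a bijection as soon as `B r - B s` is injective and the 12 differences of the
translations form a transversal of its image. Multiplication by a generator `ω` of `𝔽₄ˣ` permutes
the nine rows cyclically in three orbits, so three rows determine the matrix and only the pairs
containing one of them have to be compared.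
-/

open Function

section DifferenceMatrix

variable {ρ κ G : Type*} [AddGroup G]

/-- `D` is a difference matrix of index one over the group `G`, with rows indexed by `ρ` and
columns indexed by `κ`: the differences of any two distinct rows run through `G` exactly once. -/
def IsDifferenceMatrix (D : ρ → κ → G) : Prop :=
  Pairwise fun r s => Bijective (D r - D s)

/-- The square of order `n` obtained from the rows `r₀` and `r` of a difference matrix by
developing their difference over `G`. The equivalences number the elements of `G` and the
columns. -/
def differenceSquare {n : ℕ} (eG : G ≃ Fin n) (eκ : κ ≃ Fin n) (D : ρ → κ → G) (r₀ r : ρ) :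
    Fin n → Fin n → Fin n :=
  fun g c => eG ((D r - D r₀) (eκ.symm c) + eG.symm g)

namespace IsDifferenceMatrix

variable {D : ρ → κ → G} {n : ℕ}

theorem isLatinSquare_differenceSquare (hD : IsDifferenceMatrix D) (eG : G ≃ Fin n)
    (eκ : κ ≃ Fin n) {r₀ r : ρ} (hr : r ≠ r₀) :
    IsLatinSquare (differenceSquare eG eκ D r₀ r) :=
  ⟨fun g => eG.bijective.comp <|
      (AddGroup.addRight_bijective (eG.symm g)).comp <| (hD hr).comp eκ.symm.bijective,
    fun c => eG.bijective.comp <|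
      (AddGroup.addLeft_bijective ((D r - D r₀) (eκ.symm c))).comp eG.symm.bijective⟩

theorem isOrthogonal_differenceSquare (hD : IsDifferenceMatrix D) (eG : G ≃ Fin n)
    (eκ : κ ≃ Fin n) (r₀ : ρ) {r s : ρ} (hrs : r ≠ s) :
    IsOrthogonal (differenceSquare eG eκ D r₀ r) (differenceSquare eG eκ D r₀ s) := by
  have sub_eq (g c : Fin n) : eG.symm (differenceSquare eG eκ D r₀ r g c) -
      eG.symm (differenceSquare eG eκ D r₀ s g c) = (D r - D s) (eκ.symm c) := by
    simp [differenceSquare]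
  rintro ⟨g, c⟩ ⟨g', c'⟩ h
  obtain ⟨h_r, h_s⟩ := Prod.mk.inj h
  dsimp only at h_r h_s
  obtain rfl : c = c' := by
    apply eκ.symm.injective
    apply (hD hrs).injective
    rw [← sub_eq g c, ← sub_eq g' c', h_r, h_s]
  obtain rfl : g = g' := by simpa [differenceSquare] using h_r
  rfl

end IsDifferenceMatrix

theorem bijective_sub_iff_of_equivariant {D : ρ → κ → G} (θ : Equiv.Perm κ) (φ : G ≃+ G)
    {r r' s s' : ρ} (hr : ∀ c, D r' (θ c) = φ (D r c)) (hs : ∀ c, D s' (θ c) = φ (D s c)) :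
    Bijective (D r' - D s') ↔ Bijective (D r - D s) := by
  have intertwine : (D r' - D s') ∘ θ = φ ∘ (D r - D s) := by
    ext c
    simp [hr, hs]
  rw [← Bijective.of_comp_iff _ θ.bijective, intertwine, Bijective.of_comp_iff' φ.bijective]

theorem isDifferenceMatrix_of_cyclic {ι : Type*} {m : ℕ} [NeZero m] {D : ι × ZMod m → κ → G}
    (θ : Equiv.Perm κ) (φ : G ≃+ G) (h_shift : ∀ i k c, D (i, k + 1) (θ c) = φ (D (i, k) c))
    (h_base : ∀ i j k, (i, 0) ≠ (j, k) → Bijective (D (i, 0) - D (j, k))) :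
    IsDifferenceMatrix D := by
  have shift_pair (i j : ι) (k l : ZMod m) (a : ℕ) :
      Bijective (D (i, k + a) - D (j, l + a)) ↔ Bijective (D (i, k) - D (j, l)) := by
    induction a with
    | zero => simp
    | succ a ih =>
      rw [← ih, Nat.cast_succ, ← add_assoc, ← add_assoc]
      exact bijective_sub_iff_of_equivariant θ φ (h_shift i _) (h_shift j _)
  rintro ⟨i, k⟩ ⟨j, l⟩ hne
  have := (shift_pair i j 0 (l - k) k.val).2 <| h_base i j (l - k) fun h => hne <| by
    obtain ⟨rfl, h_zero⟩ := Prod.mk.inj h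
    rw [sub_eq_zero.1 h_zero.symm]
  simpa using this

end DifferenceMatrix

theorem bijective_add_of_transversal {J T G : Type*} [AddGroup T] [AddGroup G]
    [Finite G] (hcard : Nat.card (J × T) = Nat.card G) (d : J → G) (b : T →+ G)
    (h : ∀ j j' t, d j = d j' + b t → j = j' ∧ t = 0) :
    Bijective fun c : J × T => d c.1 + b c.2 := by
  refine Injective.bijective_of_nat_card_le ?_ hcard.ge
  rintro ⟨j, t⟩ ⟨j', t'⟩ heq
  have hd : d j = d j' + b (t' - t) := by
    rw [map_sub, ← add_sub_assoc, eq_sub_iff_add_eq]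
    exact heq
  obtain ⟨rfl, ht⟩ := h j j' (t' - t) hd
  rw [sub_eq_zero.1 ht]

namespace OrderNinetySix

/-- The additive group of `𝔽₄ ⊕ M`. An element `x + y ω` of `𝔽₄`, where `ω² = ω + 1`, is encoded
as `(x, y)`. -/
abbrev F₄Sum (M : Type*) : Type _ := (ZMod 2 × ZMod 2) × M

/-- The automorphism of `𝔽₄ ⊕ M` that multiplies by `ω` on `𝔽₄` and fixes `M`. -/
def mulOmega {M : Type*} [AddCommGroup M] : AddAut (F₄Sum M) where
  toFun v := ((v.1.2, v.1.1 + v.1.2), v.2)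
  invFun v := ((v.1.1 + v.1.2, v.1.1), v.2)
  left_inv v := by simp [add_left_comm, CharTwo.add_self_eq_zero]
  right_inv v := by simp [add_right_comm, CharTwo.add_self_eq_zero]
  map_add' v w := by simp [add_add_add_comm]

/-- The group `𝔽₄ ⊕ 𝔽₃ ⊕ 𝔽₂³` of order 96. -/
abbrev G : Type := F₄Sum (ZMod 3 × ZMod 2 × ZMod 2 × ZMod 2)

/-- The group `𝔽₄ ⊕ 𝔽₂` of order 8 that indexes the columns within a block. -/
abbrev T : Type := F₄Sum (ZMod 2)

/-- Row `(i, k)` is the image of row `(i, 0)` under the `k`-th power of `ω`. -/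
abbrev Row : Type := Fin 3 × ZMod 3

/-- The blocks of columns; `ω` acts by `(b, l) ↦ (b, l + 1)`. -/
abbrev Block : Type := Fin 4 × ZMod 3

/-- The element of `G` with component `z` in `𝔽₃` whose remaining coordinates are the five binary
digits of `a`, the lowest two of them giving the component in `𝔽₄`. -/
def point (z : ZMod 3) (a : ℕ) : G :=
  ((a, (a / 2 : ℕ)), z, (a / 4 : ℕ), (a / 8 : ℕ), (a / 16 : ℕ))

/-- The values of row `(i, 0)` at the origins of the blocks; an entry `(z, a)` stands for
`point z a`. -/
def baseTranslation (i : Fin 3) (j : Block) : G :=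
  uncurry point
    (![![![(1, 0), (2, 6), (1, 16)], ![(0, 0), (0, 17), (2, 10)],
       ![(0, 0), (1, 14), (0, 21)], ![(0, 0), (1, 24), (0, 22)]],
     ![![(1, 10), (0, 4), (1, 30)], ![(2, 13), (2, 2), (0, 31)],
       ![(1, 27), (1, 22), (2, 5)], ![(2, 4), (1, 3), (1, 23)]],
     ![![(1, 0), (2, 24), (1, 4)], ![(2, 11), (1, 14), (1, 26)],
       ![(2, 24), (2, 23), (0, 10)], ![(1, 9), (0, 1), (1, 22)]]] i j.1 j.2)

/-- The additive map of which row `(i, 0)` is a translate on each block. -/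
def baseAdditivePart (i : Fin 3) : T →+ G :=
  AddMonoidHom.mk' (fun ⟨⟨x, y⟩, s⟩ =>
    ![((x + y + s, y), 0, 0, x + s, x + y + s),
      ((x, y + s), 0, y + s, s, x + y + s),
      ((x + s, x + y), 0, y, y, y)] i) (by decide +revert)

/-- The value of row `r` at the origin of each block. `AddAut` is written additively, so multiples
of `mulOmega` are powers of `ω`. -/
def translation (r : Row) (j : Block) : G :=
  (r.2.val • (mulOmega : AddAut G)) (baseTranslation r.1 (j.1, j.2 - r.2))

/-- The additive map of which row `r` is a translate on each block. -/
def additivePart (r : Row) : T →+ G :=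
  (r.2.val • (mulOmega : AddAut G)).toAddMonoidHom.comp <|
    (baseAdditivePart r.1).comp (-(r.2.val • (mulOmega : AddAut T))).toAddMonoidHom

/-- The `9 × 96` difference matrix over `G`. -/
def matrix (r : Row) (c : Block × T) : G :=
  translation r c.1 + additivePart r c.2

/-- The action of `ω` on the columns. -/
def columnShift : Equiv.Perm (Block × T) :=
  ((Equiv.refl _).prodCongr (Equiv.addRight 1)).prodCongr mulOmega.toEquiv

theorem translation_shift (i : Fin 3) (k : ZMod 3) (j : Block) :
    translation (i, k + 1) (j.1, j.2 + 1) = mulOmega (translation (i, k) j) := by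
  decide +revert +kernel

theorem additivePart_shift (i : Fin 3) (k : ZMod 3) (t : T) :
    additivePart (i, k + 1) (mulOmega t) = mulOmega (additivePart (i, k) t) := by
  decide +revert +kernel

theorem matrix_shift (i : Fin 3) (k : ZMod 3) (c : Block × T) :
    matrix (i, k + 1) (columnShift c) = mulOmega (matrix (i, k) c) := by
  rw [matrix, matrix, map_add, ← translation_shift, ← additivePart_shift]
  rfl

theorem additivePart_zmod_three_eq_zero (r : Row) (t : T) : (additivePart r t).2.1 = 0 := by
  decide +revert +kernel

theorem transversal_of_zmod_three_eq : ∀ i i' k, ((i, 0) : Row) ≠ (i', k) → ∀ j j',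
    ((translation (i, 0) - translation (i', k)) j).2.1 =
      ((translation (i, 0) - translation (i', k)) j').2.1 → ∀ t,
    (translation (i, 0) - translation (i', k)) j =
      (translation (i, 0) - translation (i', k)) j' +
        (additivePart (i, 0) - additivePart (i', k)) t →
    j = j' ∧ t = 0 := by
  decide +kernel

theorem transversal {i i' : Fin 3} {k : ZMod 3} (hne : ((i, 0) : Row) ≠ (i', k)) (j j' : Block)
    (t : T) (h : (translation (i, 0) - translation (i', k)) j =
      (translation (i, 0) - translation (i', k)) j' +
        (additivePart (i, 0) - additivePart (i', k)) t) :
    j = j' ∧ t = 0 := by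
  refine transversal_of_zmod_three_eq i i' k hne j j' ?_ t h
  rw [h, Prod.snd_add, Prod.fst_add, AddMonoidHom.sub_apply, Prod.snd_sub, Prod.fst_sub,
    additivePart_zmod_three_eq_zero, additivePart_zmod_three_eq_zero, sub_zero, add_zero]

theorem isDifferenceMatrix_matrix : IsDifferenceMatrix matrix := by
  refine isDifferenceMatrix_of_cyclic columnShift mulOmega matrix_shift fun i i' k hne => ?_
  convert bijective_add_of_transversal (by simp) _ _ (transversal hne) using 2 with c
  simp only [matrix, Pi.sub_apply, AddMonoidHom.sub_apply]
  exact add_sub_add_comm _ _ _ _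

end OrderNinetySix

open OrderNinetySix in
/-- There exist 8 mutually orthogonal Latin squares of order 96, i.e. N(96) ≥ 8. -/
theorem eight_MOLS_of_order_96 :
    ∃ L : Fin 8 → (Fin 96 → Fin 96 → Fin 96),
      (∀ k, IsLatinSquare (L k)) ∧
      (∀ k k', k ≠ k' → IsOrthogonal (L k) (L k')) := by
  have eG : G ≃ Fin 96 := Fintype.equivFinOfCardEq (by simp)
  have eκ : Block × T ≃ Fin 96 := Fintype.equivFinOfCardEq (by simp)
  have eRow : {r : Row // r ≠ 0} ≃ Fin 8 := Fintype.equivFinOfCardEq (by simp)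
  have hD := isDifferenceMatrix_matrix
  refine ⟨fun k => differenceSquare eG eκ matrix 0 (eRow.symm k), fun k => ?_, fun k k' hk => ?_⟩
  · exact hD.isLatinSquare_differenceSquare eG eκ (eRow.symm k).2
  · exact hD.isOrthogonal_differenceSquare eG eκ 0 <|
      Subtype.val_injective.ne (eRow.symm.injective.ne hk)
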